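/- Let d ≥ 2 be an integer, let V be a set, and let c be a 2-coloring of the complete digraph on V. Suppose there exists X ⊆ V with |X| = d + 1 such that c(x,x) = red for all x ∈ X and c(u,v) = c(v,u) = blue for all distinct u,v ∈ X. Then V can be covered by at most d red d-dominating sets together with one blue d-dominating set; in particular, V can be covered by at most d + 1 monochromatic d-dominating subgraphs. -/

import Mathlib

/-- The two colors for 2-colorings of complete digraphs. -/
inductive Color where
  | red : Color
  | blue : Color

/-- `U'`, together with the color `j`, is a `j`-colored `d`-dominating set: every finite
`S ⊆ U'` with `1 ≤ |S| ≤ d` has a common out-neighbor `w ∈ U'` with all edges of color `j`. -/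
def IsMonoDom {V : Type*} (c : V → V → Color) (d : ℕ) (j : Color) (U' : Set V) : Prop :=
  ∀ S : Finset V, ↑S ⊆ U' → S.Nonempty → S.card ≤ d →
    ∃ w ∈ U', ∀ s ∈ S, c s w = j

/-- Lemma: if there is a set `X` of `d+1` vertices with red loops, pairwise joined by
blue edges in both directions, then `V` can be covered by at most `d` red
`d`-dominating sets together with one blue `d`-dominating set. -/
theorem cover_with_blue_clique {V : Type*} (d : ℕ) (hd : 2 ≤ d)
    (c : V → V → Color) (X : Finset V) (hX : X.card = d + 1)
    (hloop : ∀ x ∈ X, c x x = Color.red)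
    (hblue : ∀ u ∈ X, ∀ v ∈ X, u ≠ v → c u v = Color.blue ∧ c v u = Color.blue) :
    ∃ n : ℕ, n ≤ d ∧ ∃ (W : Fin n → Set V) (Ub : Set V),
      ((⋃ i, W i) ∪ Ub) = Set.univ ∧
      (∀ i, IsMonoDom c d Color.red (W i)) ∧
      IsMonoDom c d Color.blue Ub := by
  classical
  obtain ⟨x0, hx0⟩ : X.Nonempty := Finset.card_pos.mp (by omega)
  have hY : (X.erase x0).card = d := by
    rw [Finset.card_erase_of_mem hx0]; omega
  have hYX : ∀ y ∈ X.erase x0, y ∈ X := fun y hy => Finset.mem_of_mem_erase hy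
  have hx0Y : ∀ y ∈ X.erase x0, y ≠ x0 := fun y hy => Finset.ne_of_mem_erase hy
  generalize X.erase x0 = Y at *
  let e := (Y.equivFinOfCardEq hY).symm
  refine ⟨d, le_rfl, fun i => {v | c v (e i) = Color.red},
    {v | ∀ y ∈ Y, c v y = Color.blue} ∪ (Y : Set V), ?_, ?_, ?_⟩
  · ext v
    simp only [Set.mem_union, Set.mem_iUnion, Set.mem_setOf_eq, Set.mem_univ, iff_true]
    by_cases h : ∃ i, c v (e i) = Color.red
    · exact Or.inl h
    · refine Or.inr (Or.inl fun y hy => ?_)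
      cases hc : c v y with
      | blue => rfl
      | red => exact absurd ⟨e.symm ⟨y, hy⟩, by simpa using hc⟩ h
  · intro i S hS _ _
    exact ⟨e i, hloop _ (hYX _ (e i).2), fun s hs => hS hs⟩
  · intro S hS _ hcard
    by_cases h : Y ⊆ S
    · have hSY : Y = S := Finset.eq_of_subset_of_card_le h (by omega)
      subst hSY
      refine ⟨x0, Or.inl fun y hy => ?_, fun s hs => ?_⟩
      · exact (hblue y (hYX y hy) x0 hx0 (hx0Y y hy)).2
      · exact (hblue s (hYX s hs) x0 hx0 (hx0Y s hs)).1
    · obtain ⟨y, hy, hyS⟩ := Finset.not_subset.mp h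
      refine ⟨y, Or.inr hy, fun s hs => ?_⟩
      rcases hS hs with h1 | h1
      · exact h1 y hy
      · refine (hblue s (hYX s h1) y (hYX y hy) ?_).1
        rintro rfl
        exact hyS hs
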